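/- arXiv:0801.4259 — 5 statements merged into one kernel-verified Lean document; each statement's English description precedes it below -/
import Mathlib

section
/- Let A ⊆ B be von Neumann algebras acting on a complex Hilbert space K, and let η ∈ K be a vector that is cyclic for A, separating for B, and tracial for B, i.e. ⟨x y η, η⟩ = ⟨y x η, η⟩ for all x, y ∈ B. Then A = B. -/
/-!
The antilinear map `x ξ ↦ x⋆ ξ` attached to a tracial vector `ξ` of `B` is isometric, so if `A ξ` is
dense, its graph over `B` lies in the closure of its graph over `A`. For `t` in the commutant of `A`
the identity `⟪t (x ξ), ξ⟫ = ⟪t ξ, x⋆ ξ⟫` is trivial for `x ∈ A` and involves `x` only through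
`(x ξ, x⋆ ξ)`, hence it extends to `x ∈ B`. Applying it to `x = c⋆ b a` with `a, c ∈ A` and `b ∈ B`
shows that `t b` and `b t` have the same matrix coefficients on the dense subspace `A ξ`. So `A` and
`B` have the same commutant, and the double commutant theorem concludes.
-/

open scoped InnerProductSpace
open Filter

variable {H : Type*} [NormedAddCommGroup H] [InnerProductSpace ℂ H] [CompleteSpace H]

/-- The positive cone `P♯`: the closure in `H` of `{a ξ₀ : a ∈ M, a positive}`. -/
def sharpCone (M : VonNeumannAlgebra H) (ξ₀ : H) : Set H :=
  closure {ζ : H | ∃ a : H →L[ℂ] H, a ∈ M ∧ a.IsPositive ∧ a ξ₀ = ζ}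

/-- `ξ₀` is a cyclic vector for `M`: the linear span of `{x ξ₀ : x ∈ M}` is dense in `H`. -/
def IsCyclicVector (M : VonNeumannAlgebra H) (ξ₀ : H) : Prop :=
  Dense ((Submodule.span ℂ ((fun x : H →L[ℂ] H => x ξ₀) '' (M : Set (H →L[ℂ] H)))) : Set H)

/-- `ξ₀` is a separating vector for `M`: `x ∈ M` and `x ξ₀ = 0` imply `x = 0`. -/
def IsSeparatingVector (M : VonNeumannAlgebra H) (ξ₀ : H) : Prop :=
  ∀ x : H →L[ℂ] H, x ∈ M → x ξ₀ = 0 → x = 0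

section TracialVector

variable {𝕜 E S : Type*} [RCLike 𝕜] [NormedAddCommGroup E] [InnerProductSpace 𝕜 E]

/-- A vector `ξ` is tracial for a set `M` of operators if the vector functional `x ↦ ⟪x ξ, ξ⟫`
satisfies the trace identity on `M`. Products are taken in `E →L[𝕜] E`, so `M` need not be closed
under multiplication. -/
def IsTracialVector (M : Set (E →L[𝕜] E)) (ξ : E) : Prop :=
  ∀ x ∈ M, ∀ y ∈ M, ⟪(x * y) ξ, ξ⟫_𝕜 = ⟪(y * x) ξ, ξ⟫_𝕜

variable [CompleteSpace E] {ξ : E}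

theorem IsTracialVector.norm_star_apply {M : Set (E →L[𝕜] E)} (hξ : IsTracialVector M ξ)
    {x : E →L[𝕜] E} (hx : x ∈ M) (hx' : star x ∈ M) : ‖star x ξ‖ = ‖x ξ‖ := by
  have hsq (y : E →L[𝕜] E) : ‖y ξ‖ ^ 2 = RCLike.re ⟪(star y * y) ξ, ξ⟫_𝕜 :=
    y.apply_norm_sq_eq_inner_adjoint_left ξ
  rw [← sq_eq_sq₀ (norm_nonneg _) (norm_nonneg _), hsq, hsq, star_star, hξ x hx (star x) hx']

variable [SetLike S (E →L[𝕜] E)] [AddSubgroupClass S (E →L[𝕜] E)]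
  [StarMemClass S (E →L[𝕜] E)] {M : Set (E →L[𝕜] E)} {B : S}

theorem IsTracialVector.dist_star_apply (hξ : IsTracialVector (B : Set (E →L[𝕜] E)) ξ)
    {x y : E →L[𝕜] E} (hx : x ∈ B) (hy : y ∈ B) :
    dist (star x ξ) (star y ξ) = dist (x ξ) (y ξ) := by
  have hxy : x - y ∈ B := sub_mem hx hy
  simpa only [dist_eq_norm, star_sub, sub_apply] using hξ.norm_star_apply hxy (star_mem hxy)

theorem IsTracialVector.apply_star_apply_mem_closure
    (hξ : IsTracialVector (B : Set (E →L[𝕜] E)) ξ) (hMB : M ⊆ B)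
    (hdense : Dense ((fun a : E →L[𝕜] E ↦ a ξ) '' M)) {x : E →L[𝕜] E} (hx : x ∈ B) :
    (x ξ, star x ξ) ∈ closure ((fun a : E →L[𝕜] E ↦ (a ξ, star a ξ)) '' M) := by
  refine Metric.mem_closure_iff.mpr fun ε hε ↦ ?_
  obtain ⟨_, ⟨a, ha, rfl⟩, hxa⟩ := Metric.mem_closure_iff.mp (hdense (x ξ)) ε hε
  refine ⟨_, ⟨a, ha, rfl⟩, ?_⟩
  rwa [Prod.dist_eq, hξ.dist_star_apply hx (hMB ha), max_self]

theorem IsTracialVector.inner_apply_apply_eq_of_mem_centralizer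
    (hξ : IsTracialVector (B : Set (E →L[𝕜] E)) ξ) (hMB : M ⊆ B)
    (hdense : Dense ((fun a : E →L[𝕜] E ↦ a ξ) '' M)) {t x : E →L[𝕜] E}
    (ht : t ∈ M.centralizer) (hx : x ∈ B) :
    ⟪t (x ξ), ξ⟫_𝕜 = ⟪t ξ, star x ξ⟫_𝕜 := by
  have hclosed : IsClosed {p : E × E | ⟪t p.1, ξ⟫_𝕜 = ⟪t ξ, p.2⟫_𝕜} :=
    isClosed_eq (by fun_prop) (by fun_prop)
  refine closure_minimal ?_ hclosed (hξ.apply_star_apply_mem_closure hMB hdense hx)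
  rintro _ ⟨a, ha, rfl⟩
  have hat : a (t ξ) = t (a ξ) := DFunLike.congr_fun (ht a ha) ξ
  simp only [Set.mem_ofPred_eq, ContinuousLinearMap.star_eq_adjoint,
    ContinuousLinearMap.adjoint_inner_right, hat]

variable [MulMemClass S (E →L[𝕜] E)]

theorem IsTracialVector.inner_apply_comm_of_mem_centralizer
    (hξ : IsTracialVector (B : Set (E →L[𝕜] E)) ξ) (hMB : M ⊆ B) (hstar : ∀ a ∈ M, star a ∈ M)
    (hdense : Dense ((fun a : E →L[𝕜] E ↦ a ξ) '' M)) {t a b c : E →L[𝕜] E}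
    (ht : t ∈ M.centralizer) (ha : a ∈ M) (hb : b ∈ B) (hc : c ∈ M) :
    ⟪t (b (a ξ)), c ξ⟫_𝕜 = ⟪b (t (a ξ)), c ξ⟫_𝕜 := by
  have hcomm {d : E →L[𝕜] E} (hd : d ∈ M) (v : E) : d (t v) = t (d v) :=
    DFunLike.congr_fun (ht d hd) v
  have hcba : star c * b * a ∈ B := mul_mem (mul_mem (hMB (hstar c hc)) hb) (hMB ha)
  calc ⟪t (b (a ξ)), c ξ⟫_𝕜
      = ⟪star c (t (b (a ξ))), ξ⟫_𝕜 := (c.adjoint_inner_left _ _).symm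
    _ = ⟪t ((star c * b * a) ξ), ξ⟫_𝕜 := by rw [hcomm (hstar c hc)]; rfl
    _ = ⟪t ξ, star (star c * b * a) ξ⟫_𝕜 :=
      hξ.inner_apply_apply_eq_of_mem_centralizer hMB hdense ht hcba
    _ = ⟪star c (b (a (t ξ))), ξ⟫_𝕜 := ContinuousLinearMap.adjoint_inner_right _ _ _
    _ = ⟪b (a (t ξ)), c ξ⟫_𝕜 := c.adjoint_inner_left _ _
    _ = ⟪b (t (a ξ)), c ξ⟫_𝕜 := by rw [hcomm ha]

theorem stmt9_general (hMB : M ⊆ B) (hstar : ∀ a ∈ M, star a ∈ M)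
    (hdense : Dense ((fun a : E →L[𝕜] E ↦ a ξ) '' M))
    (hξ : IsTracialVector (B : Set (E →L[𝕜] E)) ξ) :
    M.centralizer = (B : Set (E →L[𝕜] E)).centralizer := by
  refine Set.Subset.antisymm (fun t ht b hb ↦ ?_) (Set.centralizer_subset hMB)
  refine DFunLike.coe_injective <| (b * t).continuous.ext_on hdense (t * b).continuous ?_
  rintro _ ⟨a, ha, rfl⟩
  refine hdense.eq_of_inner_left 𝕜 ?_
  rintro _ ⟨c, hc, rfl⟩
  exact (hξ.inner_apply_comm_of_mem_centralizer hMB hstar hdense ht ha hb hc).symm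

end TracialVector

theorem IsCyclicVector.dense_image_apply {M : VonNeumannAlgebra H} {ξ : H}
    (hξ : IsCyclicVector M ξ) :
    Dense ((fun x : H →L[ℂ] H ↦ x ξ) '' (M : Set (H →L[ℂ] H))) := by
  let orbit : Submodule ℂ H :=
    M.toSubalgebra.toSubmodule.map (ContinuousLinearMap.apply ℂ H ξ).toLinearMap
  have hspan : Submodule.span ℂ ((fun x : H →L[ℂ] H ↦ x ξ) '' (M : Set (H →L[ℂ] H))) = orbit :=
    orbit.span_eq
  rwa [IsCyclicVector, hspan] at hξ

/-- If `A ⊆ B` are von Neumann algebras and `η` is cyclic for `A`, separating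
for `B`, and tracial for `B`, then `A = B`. -/
theorem stmt9 {K : Type*} [NormedAddCommGroup K] [InnerProductSpace ℂ K] [CompleteSpace K]
    (A B : VonNeumannAlgebra K)
    (hAB : (A : Set (K →L[ℂ] K)) ⊆ (B : Set (K →L[ℂ] K)))
    (η : K)
    (hcycA : IsCyclicVector A η)
    (hsepB : IsSeparatingVector B η)
    (htr : ∀ x ∈ B, ∀ y ∈ B, ⟪(x * y) η, η⟫_ℂ = ⟪(y * x) η, η⟫_ℂ) :
    A = B := by
  have hcentralizer := stmt9_general hAB (fun _ ↦ star_mem) hcycA.dense_image_apply htr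
  exact SetLike.coe_injective <| by
    rw [← A.centralizer_centralizer, hcentralizer, B.centralizer_centralizer]
end

section
/- Let H be a complex Hilbert space, M a von Neumann algebra acting on H, and ξ₀ a cyclic and separating vector for M. Let p be an orthogonal projection on H such that p(P♯) ⊆ P♯ and (1 − p)(P♯) ⊆ P♯. Then for every positive a ∈ M there exists a positive element α(a) ∈ M such that p a ξ₀ = α(a) ξ₀ and α(a) ≤ a (i.e. a − α(a) is positive). -/
open scoped InnerProductSpace
open Filter

variable {H : Type*} [NormedAddCommGroup H] [InnerProductSpace ℂ H] [CompleteSpace H]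

/-!
If `ζ ∈ P♯`, then `⟪x ζ, y ξ₀⟫` is a positive semidefinite form in `x, y` in the commutant `M'`:
for `ζ = c ξ₀` with `c ∈ M` positive it is `⟪c (x ξ₀), y ξ₀⟫`, and positivity and the
Cauchy-Schwarz inequality survive limits in `ζ`. If moreover `a ξ₀ - ζ ∈ P♯` with `a ∈ M`, this
form is dominated by the one of `a`, so that `‖y ζ‖ ≤ ‖a‖ ‖y ξ₀‖`. As `ξ₀` is cyclic for `M'`, the
assignment `y ξ₀ ↦ y ζ` extends to a bounded operator `b`; it commutes with `M'`, hence lies in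
`M'' = M`, and `b ξ₀ = ζ`. An element of `M` is positive as soon as it sends `ξ₀` into `P♯`, which
gives both `0 ≤ b` and `b ≤ a`. The theorem is the case `ζ = p (a ξ₀)`.
-/

open scoped ComplexOrder

section InnerProductSpace

variable {𝕜 E ι : Type*} [RCLike 𝕜] [NormedAddCommGroup E]

theorem norm_inner_map_sq_le_of_isPositive [InnerProductSpace 𝕜 E] {T : E →ₗ[𝕜] E}
    (hT : T.IsPositive) (u v : E) :
    ‖⟪T u, v⟫_𝕜‖ ^ 2 ≤ RCLike.re ⟪T u, u⟫_𝕜 * RCLike.re ⟪T v, v⟫_𝕜 := by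
  let form : PreInnerProductSpace.Core 𝕜 E :=
    { inner u v := ⟪T u, v⟫_𝕜
      conj_inner_symm u v := by rw [inner_conj_symm, hT.isSymmetric u v]
      re_inner_nonneg := hT.re_inner_nonneg_left
      add_left u v w := by rw [map_add, inner_add_left]
      smul_left u v r := by rw [map_smul, inner_smul_left] }
  have hsymm : ‖⟪T v, u⟫_𝕜‖ = ‖⟪T u, v⟫_𝕜‖ := by rw [hT.isSymmetric v u, norm_inner_symm]
  calc ‖⟪T u, v⟫_𝕜‖ ^ 2 = ‖⟪T u, v⟫_𝕜‖ * ‖⟪T v, u⟫_𝕜‖ := by rw [hsymm, sq]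
    _ ≤ RCLike.re ⟪T u, u⟫_𝕜 * RCLike.re ⟪T v, v⟫_𝕜 :=
      InnerProductSpace.Core.inner_mul_inner_self_le (c := form) u v

theorem norm_le_of_denseRange_of_norm_inner_le [InnerProductSpace 𝕜 E] {e : ι → E}
    (he : DenseRange e) {w : E} {C : ℝ} (hC : 0 ≤ C) (h : ∀ i, ‖⟪w, e i⟫_𝕜‖ ≤ C * ‖e i‖) :
    ‖w‖ ≤ C := by
  have hw : ‖⟪w, w⟫_𝕜‖ ≤ C * ‖w‖ :=
    he.induction_on (p := fun v => ‖⟪w, v⟫_𝕜‖ ≤ C * ‖v‖) w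
      (isClosed_le (by fun_prop) (by fun_prop)) h
  rw [← inner_self_re_eq_norm, inner_self_eq_norm_mul_norm] at hw
  rcases (norm_nonneg w).eq_or_lt with h0 | h0
  · rwa [← h0]
  · exact le_of_mul_le_mul_right hw h0

theorem isPositive_of_denseRange [InnerProductSpace ℂ E] {e : ι → E} (he : DenseRange e)
    {T : E →L[ℂ] E} (h : ∀ i, 0 ≤ ⟪T (e i), e i⟫_ℂ) : T.IsPositive := by
  refine T.isPositive_iff_complex.2 fun v => ?_
  have hv : 0 ≤ ⟪T v, v⟫_ℂ :=
    he.induction_on (p := fun v => 0 ≤ ⟪T v, v⟫_ℂ) v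
      (isClosed_le continuous_const (by fun_prop)) h
  exact ⟨(Complex.eq_re_of_ofReal_le hv).symm, (Complex.nonneg_iff.1 hv).1⟩

end InnerProductSpace

/-- The orbit map `x ↦ x ξ` of a vector `ξ` under a von Neumann algebra `N`, as a linear map: the
orbits of two vectors are compared through these maps. -/
noncomputable def orbitMap (N : VonNeumannAlgebra H) (ξ : H) : N.toStarSubalgebra →ₗ[ℂ] H :=
  (ContinuousLinearMap.apply ℂ H ξ).toLinearMap ∘ₗ N.toStarSubalgebra.subtype.toLinearMap

section Orbit

variable {N : VonNeumannAlgebra H} {ξ ζ : H}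

theorem isCyclicVector_iff_denseRange_orbitMap :
    IsCyclicVector N ξ ↔ DenseRange (orbitMap N ξ) := by
  have horbit : (fun x : H →L[ℂ] H => x ξ) '' N = LinearMap.range (orbitMap N ξ) := by
    ext v
    simp [orbitMap]
  rw [IsCyclicVector, horbit, Submodule.span_eq, LinearMap.coe_range, DenseRange]

theorem apply_comm_of_mem_commutant {a x : H →L[ℂ] H} (ha : a ∈ N) (hx : x ∈ N.commutant) (v : H) :
    x (a v) = a (x v) :=
  (DFunLike.congr_fun (VonNeumannAlgebra.mem_commutant_iff.1 hx a ha) v).symm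

theorem starProjection_topologicalClosure_range_orbitMap_mem (N : VonNeumannAlgebra H) (ξ : H) :
    (LinearMap.range (orbitMap N ξ)).topologicalClosure.starProjection ∈ N.commutant := by
  rw [VonNeumannAlgebra.IsStarProjection.mem_iff isStarProjection_starProjection,
    N.commutant_commutant, Submodule.range_starProjection]
  intro y hy v hv
  refine map_mem_closure y.continuous hv ?_
  rintro _ ⟨x, rfl⟩
  exact ⟨⟨y, hy⟩ * x, rfl⟩

theorem IsSeparatingVector.isCyclicVector_commutant (hξ : IsSeparatingVector N ξ) :
    IsCyclicVector N.commutant ξ := by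
  set K := (LinearMap.range (orbitMap N.commutant ξ)).topologicalClosure
  have hK : K.starProjection ∈ N := by
    simpa only [N.commutant_commutant] using
      starProjection_topologicalClosure_range_orbitMap_mem N.commutant ξ
  have hξK : ξ ∈ K := Submodule.le_topologicalClosure _ ⟨1, rfl⟩
  have hone : 1 - K.starProjection = 0 :=
    hξ _ (sub_mem (one_mem N) hK) (by simp [Submodule.starProjection_eq_self_iff.2 hξK])
  refine isCyclicVector_iff_denseRange_orbitMap.2 fun v => ?_
  exact Submodule.starProjection_eq_self_iff.1 (DFunLike.congr_fun (sub_eq_zero.1 hone) v).symm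

theorem IsCyclicVector.exists_mem_commutant_apply_eq (hξ : IsCyclicVector N ξ) {C : ℝ}
    (hC : ∀ y ∈ N, ‖y ζ‖ ≤ C * ‖y ξ‖) : ∃ b ∈ N.commutant, b ξ = ζ := by
  let b : H →L[ℂ] H := (orbitMap N ζ).extendOfNorm (orbitMap N ξ)
  have hb : ∀ y ∈ N, b (y ξ) = y ζ := fun y hy =>
    LinearMap.extendOfNorm_eq (f := orbitMap N ζ) (isCyclicVector_iff_denseRange_orbitMap.1 hξ)
      ⟨C, fun y => hC y y.2⟩ ⟨y, hy⟩
  refine ⟨b, VonNeumannAlgebra.mem_commutant_iff.2 fun g hg => ?_, hb 1 (one_mem N)⟩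
  refine ContinuousLinearMap.ext_on hξ ?_
  rintro _ ⟨x, hx, rfl⟩
  calc g (b (x ξ)) = (g * x) ζ := by rw [hb x hx, mul_apply_eq_comp]
    _ = b ((g * x) ξ) := (hb _ (mul_mem hg hx)).symm

end Orbit

section SharpCone

variable {M : VonNeumannAlgebra H} {ξ₀ ζ : H} {a x y : H →L[ℂ] H}

theorem apply_mem_sharpCone (ha : a ∈ M) (ha_pos : a.IsPositive) : a ξ₀ ∈ sharpCone M ξ₀ :=
  subset_closure ⟨a, ha, ha_pos, rfl⟩

theorem inner_apply_nonneg_of_mem_sharpCone (hζ : ζ ∈ sharpCone M ξ₀) (hx : x ∈ M.commutant) :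
    0 ≤ ⟪x ζ, x ξ₀⟫_ℂ := by
  have hclosed : IsClosed {ζ : H | 0 ≤ ⟪x ζ, x ξ₀⟫_ℂ} :=
    isClosed_le continuous_const (by fun_prop)
  refine closure_minimal ?_ hclosed hζ
  rintro _ ⟨c, hc, hc_pos, rfl⟩
  rw [Set.mem_ofPred_eq, apply_comm_of_mem_commutant hc hx]
  exact hc_pos.inner_nonneg_left (x ξ₀)

theorem norm_inner_sq_le_of_mem_sharpCone (hζ : ζ ∈ sharpCone M ξ₀) (hx : x ∈ M.commutant)
    (hy : y ∈ M.commutant) :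
    ‖⟪x ζ, y ξ₀⟫_ℂ‖ ^ 2 ≤ (⟪x ζ, x ξ₀⟫_ℂ).re * (⟪y ζ, y ξ₀⟫_ℂ).re := by
  have hclosed : IsClosed {ζ : H | ‖⟪x ζ, y ξ₀⟫_ℂ‖ ^ 2 ≤
      (⟪x ζ, x ξ₀⟫_ℂ).re * (⟪y ζ, y ξ₀⟫_ℂ).re} :=
    isClosed_le (by fun_prop) (by fun_prop)
  refine closure_minimal ?_ hclosed hζ
  rintro _ ⟨c, hc, hc_pos, rfl⟩
  rw [Set.mem_ofPred_eq, apply_comm_of_mem_commutant hc hx, apply_comm_of_mem_commutant hc hy]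
  exact norm_inner_map_sq_le_of_isPositive hc_pos (x ξ₀) (y ξ₀)

theorem re_inner_apply_le_of_sub_mem_sharpCone (ha : a ∈ M) (hζ : a ξ₀ - ζ ∈ sharpCone M ξ₀)
    (hx : x ∈ M.commutant) : (⟪x ζ, x ξ₀⟫_ℂ).re ≤ ‖a‖ * ‖x ξ₀‖ ^ 2 := by
  have hdom : (⟪x ζ, x ξ₀⟫_ℂ).re ≤ (⟪a (x ξ₀), x ξ₀⟫_ℂ).re := by
    have h := (Complex.nonneg_iff.1 (inner_apply_nonneg_of_mem_sharpCone hζ hx)).1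
    rwa [map_sub, inner_sub_left, Complex.sub_re, sub_nonneg,
      apply_comm_of_mem_commutant ha hx] at h
  calc (⟪x ζ, x ξ₀⟫_ℂ).re ≤ (⟪a (x ξ₀), x ξ₀⟫_ℂ).re := hdom
    _ ≤ ‖a (x ξ₀)‖ * ‖x ξ₀‖ := (Complex.re_le_norm _).trans (norm_inner_le_norm _ _)
    _ ≤ ‖a‖ * ‖x ξ₀‖ * ‖x ξ₀‖ := by gcongr; exact a.le_opNorm _
    _ = ‖a‖ * ‖x ξ₀‖ ^ 2 := by ring

theorem norm_apply_le_of_mem_sharpCone_of_sub_mem_sharpCone (hsep : IsSeparatingVector M ξ₀)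
    (ha : a ∈ M) (hζ : ζ ∈ sharpCone M ξ₀) (hζ' : a ξ₀ - ζ ∈ sharpCone M ξ₀)
    (hx : x ∈ M.commutant) : ‖x ζ‖ ≤ ‖a‖ * ‖x ξ₀‖ := by
  refine norm_le_of_denseRange_of_norm_inner_le (𝕜 := ℂ)
    (isCyclicVector_iff_denseRange_orbitMap.1 hsep.isCyclicVector_commutant) (by positivity)
    fun ⟨y, hy⟩ => ?_
  change ‖⟪x ζ, y ξ₀⟫_ℂ‖ ≤ ‖a‖ * ‖x ξ₀‖ * ‖y ξ₀‖
  refine le_of_sq_le_sq ?_ (by positivity)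
  calc ‖⟪x ζ, y ξ₀⟫_ℂ‖ ^ 2
      ≤ (⟪x ζ, x ξ₀⟫_ℂ).re * (⟪y ζ, y ξ₀⟫_ℂ).re := norm_inner_sq_le_of_mem_sharpCone hζ hx hy
    _ ≤ (‖a‖ * ‖x ξ₀‖ ^ 2) * (‖a‖ * ‖y ξ₀‖ ^ 2) := by
      gcongr
      · exact (Complex.nonneg_iff.1 (inner_apply_nonneg_of_mem_sharpCone hζ hy)).1
      · exact re_inner_apply_le_of_sub_mem_sharpCone ha hζ' hx
      · exact re_inner_apply_le_of_sub_mem_sharpCone ha hζ' hy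
    _ = (‖a‖ * ‖x ξ₀‖ * ‖y ξ₀‖) ^ 2 := by ring

theorem isPositive_of_apply_mem_sharpCone (hsep : IsSeparatingVector M ξ₀) (ha : a ∈ M)
    (haξ : a ξ₀ ∈ sharpCone M ξ₀) : a.IsPositive := by
  refine isPositive_of_denseRange
    (isCyclicVector_iff_denseRange_orbitMap.1 hsep.isCyclicVector_commutant) fun ⟨x, hx⟩ => ?_
  change 0 ≤ ⟪a (x ξ₀), x ξ₀⟫_ℂ
  rw [← apply_comm_of_mem_commutant ha hx]
  exact inner_apply_nonneg_of_mem_sharpCone haξ hx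

/-- A Radon-Nikodym theorem for the order on `H` whose positive cone is `P♯`. -/
theorem stmt10_general (hsep : IsSeparatingVector M ξ₀) (ha : a ∈ M)
    (hζ : ζ ∈ sharpCone M ξ₀) (hζ' : a ξ₀ - ζ ∈ sharpCone M ξ₀) :
    ∃ b : H →L[ℂ] H, b ∈ M ∧ b.IsPositive ∧ ζ = b ξ₀ ∧ (a - b).IsPositive := by
  obtain ⟨b, hbM, rfl⟩ := hsep.isCyclicVector_commutant.exists_mem_commutant_apply_eq
    fun _ hx => norm_apply_le_of_mem_sharpCone_of_sub_mem_sharpCone hsep ha hζ hζ' hx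
  rw [M.commutant_commutant] at hbM
  exact ⟨b, hbM, isPositive_of_apply_mem_sharpCone hsep hbM hζ, rfl,
    isPositive_of_apply_mem_sharpCone hsep (sub_mem ha hbM) hζ'⟩

end SharpCone

/-- If the orthogonal projection `p` and `1 - p` both preserve `P♯`, then for
every positive `a ∈ M` there is a positive `α(a) ∈ M` with `p a ξ₀ = α(a) ξ₀` and `α(a) ≤ a`. -/
theorem stmt10 (M : VonNeumannAlgebra H) (ξ₀ : H)
    (hcyc : IsCyclicVector M ξ₀) (hsep : IsSeparatingVector M ξ₀)
    (p : H →L[ℂ] H) (hp_sa : IsSelfAdjoint p) (hp_idem : p * p = p)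
    (hp : ∀ ζ ∈ sharpCone M ξ₀, p ζ ∈ sharpCone M ξ₀)
    (hp' : ∀ ζ ∈ sharpCone M ξ₀, (1 - p) ζ ∈ sharpCone M ξ₀)
    (a : H →L[ℂ] H) (haM : a ∈ M) (ha_pos : a.IsPositive) :
    ∃ b : H →L[ℂ] H, b ∈ M ∧ b.IsPositive ∧ p (a ξ₀) = b ξ₀ ∧ (a - b).IsPositive := by
  have hmem : a ξ₀ ∈ sharpCone M ξ₀ := apply_mem_sharpCone haM ha_pos
  exact stmt10_general hsep haM (hp _ hmem) (by simpa using hp' _ hmem)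
end

section
/- Let H be a complex Hilbert space, M a von Neumann algebra acting on H, and ξ₀ a separating vector for M. Let p be an orthogonal projection on H. If e ∈ M is a projection and b ∈ M is positive with b ≤ e (i.e. e − b positive) and b ξ₀ = p e ξ₀, then b is a projection, i.e. b² = b. -/
open scoped InnerProductSpace
open Filter

variable {H : Type*} [NormedAddCommGroup H] [InnerProductSpace ℂ H] [CompleteSpace H]

/-!
Since `p` is an orthogonal projection, `b ξ₀ = p (e ξ₀)` gives `⟪b ξ₀, b ξ₀⟫ = ⟪b ξ₀, e ξ₀⟫`, and
the right-hand side is `⟪b ξ₀, ξ₀⟫` because `0 ≤ b ≤ e` forces `b e = b`. Hence the quadratic form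
of the positive operator `b - b²` vanishes at `ξ₀`, so `(b - b²) ξ₀ = 0`, and `ξ₀` separates.
-/

section InnerProductSpace

variable {𝕜 E : Type*} [RCLike 𝕜] [NormedAddCommGroup E] [InnerProductSpace 𝕜 E]

theorem map_eq_zero_of_isPositive_of_inner_eq_zero {T : E →ₗ[𝕜] E} (hT : T.IsPositive) {x : E}
    (hx : ⟪T x, x⟫_𝕜 = 0) : T x = 0 := by
  let core : PreInnerProductSpace.Core 𝕜 E :=
    { inner y z := ⟪T y, z⟫_𝕜
      conj_inner_symm y z := by rw [inner_conj_symm, hT.isSymmetric]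
      re_inner_nonneg := hT.re_inner_nonneg_left
      add_left y z w := by rw [map_add, inner_add_left]
      smul_left y z c := by rw [map_smul, inner_smul_left] }
  have cauchySchwarz : ‖⟪T x, T x⟫_𝕜‖ * ‖⟪T (T x), x⟫_𝕜‖ ≤
      RCLike.re ⟪T x, x⟫_𝕜 * RCLike.re ⟪T (T x), T x⟫_𝕜 :=
    InnerProductSpace.Core.inner_mul_inner_self_le (c := core) x (T x)
  rw [hT.isSymmetric (T x) x, hx, map_zero, zero_mul] at cauchySchwarz
  rw [← inner_self_eq_zero (𝕜 := 𝕜), ← norm_eq_zero]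
  exact mul_self_eq_zero.mp (cauchySchwarz.antisymm (mul_self_nonneg _))

open scoped ComplexOrder in
theorem mul_eq_left_of_isPositive_of_le_isIdempotentElem {b e : E →ₗ[𝕜] E} (hb : b.IsPositive)
    (he : IsIdempotentElem e) (hbe : b ≤ e) : b * e = b := by
  ext x
  have he_ker : e (x - e x) = 0 := by
    rw [map_sub, sub_eq_zero]
    exact (LinearMap.congr_fun he x).symm
  have hb_inner : ⟪b (x - e x), x - e x⟫_𝕜 = 0 := by
    refine le_antisymm ?_ (hb.inner_nonneg_left _)
    simpa only [LinearMap.sub_apply, he_ker, zero_sub, inner_neg_left, neg_nonneg]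
      using ((LinearMap.le_def b e).mp hbe).inner_nonneg_left (x - e x)
  have hb_ker : b (x - e x) = 0 := map_eq_zero_of_isPositive_of_inner_eq_zero hb hb_inner
  rw [map_sub, sub_eq_zero] at hb_ker
  exact hb_ker.symm

theorem le_one_of_isPositive_of_le_isIdempotentElem {b e : E →ₗ[𝕜] E} (hb : b.IsPositive)
    (he : IsIdempotentElem e) (hbe : b ≤ e) : b ≤ 1 := by
  have hb_nonneg : 0 ≤ b := (LinearMap.nonneg_iff_isPositive b).mpr hb
  have he_pos : e.IsPositive := (LinearMap.nonneg_iff_isPositive e).mp (hb_nonneg.trans hbe)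
  have he_le_one : e ≤ 1 :=
    (LinearMap.IsIdempotentElem.isPositive_iff_isSymmetric he.one_sub).mpr
      (LinearMap.IsSymmetric.one.sub he_pos.isSymmetric)
  exact hbe.trans he_le_one

theorem isPositive_conj_of_isSymmetric {S T : E →ₗ[𝕜] E} (hS : S.IsSymmetric)
    (hT : T.IsPositive) : (S * T * S).IsPositive := by
  refine ⟨fun x y => ?_, fun x => ?_⟩
  · exact (hS _ _).trans ((hT.isSymmetric _ _).trans (hS _ _))
  · exact (hT.re_inner_nonneg_left (S x)).trans_eq (congrArg RCLike.re (hS _ _).symm)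

theorem isPositive_sub_mul_self {b : E →ₗ[𝕜] E} (hb : b.IsPositive) (hb1 : b ≤ 1) :
    (b - b * b).IsPositive := by
  have hdecomp : b - b * b = b * (1 - b) * b + (1 - b) * b * (1 - b) := by noncomm_ring
  rw [hdecomp]
  exact (isPositive_conj_of_isSymmetric hb.isSymmetric hb1).add
    (isPositive_conj_of_isSymmetric hb1.isSymmetric hb)

theorem map_map_eq_map_of_inner_map_self_eq {b e : E →ₗ[𝕜] E} (hb : b.IsPositive)
    (he : IsIdempotentElem e) (hbe : b ≤ e) {x : E}
    (hx : ⟪b x, b x⟫_𝕜 = ⟪b x, e x⟫_𝕜) : b (b x) = b x := by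
  have hb_sub : (b - b * b).IsPositive :=
    isPositive_sub_mul_self hb (le_one_of_isPositive_of_le_isIdempotentElem hb he hbe)
  have hbex : b (e x) = b x :=
    LinearMap.congr_fun (mul_eq_left_of_isPositive_of_le_isIdempotentElem hb he hbe) x
  have hinner : ⟪(b - b * b) x, x⟫_𝕜 = 0 := by
    calc ⟪(b - b * b) x, x⟫_𝕜 = ⟪b (e x - b x), x⟫_𝕜 := by
          rw [map_sub, hbex, LinearMap.sub_apply, Module.End.mul_apply]
      _ = ⟪e x - b x, b x⟫_𝕜 := hb.isSymmetric _ _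
      _ = 0 := by
          rw [inner_sub_left, sub_eq_zero, ← inner_conj_symm, ← hx, inner_conj_symm]
  exact (sub_eq_zero.mp (map_eq_zero_of_isPositive_of_inner_eq_zero hb_sub hinner)).symm

theorem stmt11_general {S : Type*} [SetLike S (E →L[𝕜] E)] [NonUnitalSubringClass S (E →L[𝕜] E)]
    (M : S) (ξ₀ : E) (hsep : ∀ x ∈ M, x ξ₀ = 0 → x = 0) {p e b : E →L[𝕜] E}
    (hp : (p : E →ₗ[𝕜] E).IsSymmetricProjection) (he : IsIdempotentElem e) (hbM : b ∈ M)
    (hb : b.IsPositive) (hb_le : (e - b).IsPositive) (hbe : b ξ₀ = p (e ξ₀)) :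
    b * b = b := by
  have hinner : ⟪b ξ₀, b ξ₀⟫_𝕜 = ⟪b ξ₀, e ξ₀⟫_𝕜 := by
    have hpb : p (b ξ₀) = b ξ₀ := by
      rw [hbe]
      exact LinearMap.congr_fun hp.isIdempotentElem (e ξ₀)
    calc ⟪b ξ₀, b ξ₀⟫_𝕜 = ⟪b ξ₀, p (e ξ₀)⟫_𝕜 := by rw [← hbe]
      _ = ⟪p (b ξ₀), e ξ₀⟫_𝕜 := (hp.isSymmetric _ _).symm
      _ = ⟪b ξ₀, e ξ₀⟫_𝕜 := by rw [hpb]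
  have he_lin : IsIdempotentElem (e : E →ₗ[𝕜] E) :=
    ContinuousLinearMap.IsIdempotentElem.toLinearMap he
  have hbb : b (b ξ₀) = b ξ₀ :=
    map_map_eq_map_of_inner_map_self_eq hb.toLinearMap he_lin hb_le.toLinearMap hinner
  exact sub_eq_zero.mp (hsep _ (sub_mem (mul_mem hbM hbM) hbM) (sub_eq_zero.mpr hbb))

end InnerProductSpace

/-- If `e ∈ M` is a projection and `b ∈ M` is positive with `b ≤ e` and
`b ξ₀ = p e ξ₀`, where `p` is an orthogonal projection on `H`, then `b` is a projection. -/
theorem stmt11 (M : VonNeumannAlgebra H) (ξ₀ : H) (hsep : IsSeparatingVector M ξ₀)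
    (p : H →L[ℂ] H) (hp_sa : IsSelfAdjoint p) (hp_idem : p * p = p)
    (e : H →L[ℂ] H) (heM : e ∈ M) (he_sa : IsSelfAdjoint e) (he_idem : e * e = e)
    (b : H →L[ℂ] H) (hbM : b ∈ M) (hb_pos : b.IsPositive)
    (hb_le : (e - b).IsPositive) (hbe : b ξ₀ = p (e ξ₀)) :
    b * b = b :=
  stmt11_general M ξ₀ hsep
    ⟨ContinuousLinearMap.IsIdempotentElem.toLinearMap hp_idem, hp_sa.isSymmetric⟩
    he_idem hbM hb_pos hb_le hbe
end

section
/- Let H be a complex Hilbert space, M a von Neumann algebra acting on H, and ξ₀ a cyclic and separating vector for M. If e and f are projections in M such that (ξ₀ − e ξ₀) − f ξ₀ ∈ P♯, then e and f are mutually orthogonal projections: e f = 0. -/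
open scoped InnerProductSpace
open Filter

variable {H : Type*} [NormedAddCommGroup H] [InnerProductSpace ℂ H] [CompleteSpace H]

/-!
The projection of `H` onto `[M' ξ₀]` lies in `M'' = M` and fixes `ξ₀`; as `ξ₀` is separating for
`M`, this projection is `1`, so `M' ξ₀` is dense. If `b ∈ M` and `b ξ₀` is a limit of vectors
`a ξ₀` with `0 ≤ a ∈ M`, then for `y ∈ M'` the number `⟪b y ξ₀, y ξ₀⟫ = ⟪y b ξ₀, y ξ₀⟫` is a limit
of the numbers `⟪a y ξ₀, y ξ₀⟫ ≥ 0`, so `b ≥ 0` by density. Applied to `b = 1 - e - f` this gives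
`e ≤ 1 - f`, which forces `e (1 - f) = e`.
-/

/-- The cyclic subspace `[M ξ]`: the closure in `H` of the linear span of the orbit
`{x ξ : x ∈ M}`. -/
noncomputable def cyclicSubspace (M : VonNeumannAlgebra H) (ξ : H) : Submodule ℂ H :=
  (Submodule.span ℂ ((fun x : H →L[ℂ] H => x ξ) '' (M : Set (H →L[ℂ] H)))).topologicalClosure

noncomputable instance cyclicSubspace.hasOrthogonalProjection (M : VonNeumannAlgebra H) (ξ : H) :
    (cyclicSubspace M ξ).HasOrthogonalProjection :=
  inferInstanceAs (Submodule.topologicalClosure _).HasOrthogonalProjection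

section

variable {M : VonNeumannAlgebra H} {ξ : H}

theorem isCyclicVector_iff_cyclicSubspace_eq_top :
    IsCyclicVector M ξ ↔ cyclicSubspace M ξ = ⊤ :=
  Submodule.dense_iff_topologicalClosure_eq_top

theorem isCyclicVector_iff_dense_orbit :
    IsCyclicVector M ξ ↔ Dense ((fun x : H →L[ℂ] H => x ξ) '' (M : Set (H →L[ℂ] H))) := by
  let orbit : Submodule ℂ H :=
    M.toSubalgebra.toSubmodule.map (ContinuousLinearMap.apply ℂ H ξ : (H →L[ℂ] H) →ₗ[ℂ] H)
  have horbit : (fun x : H →L[ℂ] H => x ξ) '' (M : Set (H →L[ℂ] H)) = orbit := rfl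
  rw [IsCyclicVector, horbit, orbit.span_eq]

theorem self_mem_cyclicSubspace : ξ ∈ cyclicSubspace M ξ :=
  Submodule.le_topologicalClosure _ (Submodule.subset_span ⟨1, one_mem M, rfl⟩)

theorem cyclicSubspace_mem_invtSubmodule {x : H →L[ℂ] H} (hx : x ∈ M) :
    cyclicSubspace M ξ ∈ Module.End.invtSubmodule (x : H →ₗ[ℂ] H) := by
  refine Submodule.topologicalClosure_mem_invtSubmodule (Submodule.span_le.mpr ?_)
  rintro _ ⟨y, hy, rfl⟩
  exact Submodule.subset_span ⟨x * y, mul_mem hx hy, rfl⟩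

theorem starProjection_cyclicSubspace_mem_commutant :
    (cyclicSubspace M ξ).starProjection ∈ M.commutant := by
  rw [VonNeumannAlgebra.IsStarProjection.mem_iff isStarProjection_starProjection,
    VonNeumannAlgebra.commutant_commutant, Submodule.range_starProjection]
  exact fun x hx => cyclicSubspace_mem_invtSubmodule hx

theorem IsSeparatingVector.isCyclicVector_commutant_s15 (hsep : IsSeparatingVector M ξ) :
    IsCyclicVector M.commutant ξ := by
  set p := (cyclicSubspace M.commutant ξ).starProjection with hp
  have hpM : p ∈ M := by
    simpa only [VonNeumannAlgebra.commutant_commutant] using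
      starProjection_cyclicSubspace_mem_commutant (M := M.commutant) (ξ := ξ)
  have hpξ : p ξ = ξ := Submodule.starProjection_eq_self_iff.mpr self_mem_cyclicSubspace
  have hp_one : 1 - p = 0 := hsep _ (sub_mem (one_mem M) hpM) (by simp [hpξ])
  rw [isCyclicVector_iff_cyclicSubspace_eq_top, ← Submodule.starProjection_inj,
    Submodule.starProjection_top', ← hp, sub_eq_zero.mp hp_one]

theorem apply_comm_of_mem_commutant_s15 {x y : H →L[ℂ] H} (hx : x ∈ M) (hy : y ∈ M.commutant)
    (v : H) : x (y v) = y (x v) :=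
  congr($(VonNeumannAlgebra.mem_commutant_iff.mp hy x hx) v)

open scoped ComplexOrder in
theorem inner_apply_nonneg_of_mem_sharpCone_s15 {y : H →L[ℂ] H} (hy : y ∈ M.commutant) {ζ : H}
    (hζ : ζ ∈ sharpCone M ξ) : 0 ≤ ⟪y ζ, y ξ⟫_ℂ := by
  have hclosed : IsClosed {ζ : H | 0 ≤ ⟪y ζ, y ξ⟫_ℂ} :=
    isClosed_le continuous_const (by fun_prop)
  refine closure_minimal ?_ hclosed hζ
  rintro _ ⟨a, haM, ha, rfl⟩
  rw [Set.mem_ofPred_eq, ← apply_comm_of_mem_commutant_s15 haM hy]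
  exact ha.inner_nonneg_left (y ξ)

open scoped ComplexOrder in
theorem nonneg_of_apply_mem_sharpCone (hcyc : IsCyclicVector M.commutant ξ) {b : H →L[ℂ] H}
    (hbM : b ∈ M) (hb : b ξ ∈ sharpCone M ξ) : 0 ≤ b := by
  have hclosed : IsClosed {v : H | 0 ≤ ⟪b v, v⟫_ℂ} :=
    isClosed_le continuous_const (by fun_prop)
  have horbit : ∀ v ∈ (fun y : H →L[ℂ] H => y ξ) '' M.commutant, 0 ≤ ⟪b v, v⟫_ℂ := by
    rintro _ ⟨y, hy, rfl⟩
    rw [apply_comm_of_mem_commutant_s15 hbM hy]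
    exact inner_apply_nonneg_of_mem_sharpCone_s15 hy hb
  have hb_inner : ∀ v, 0 ≤ ⟪b v, v⟫_ℂ := fun v =>
    closure_minimal horbit hclosed (isCyclicVector_iff_dense_orbit.mp hcyc v)
  rw [ContinuousLinearMap.nonneg_iff_isPositive, ContinuousLinearMap.isPositive_iff_complex]
  exact fun v => ⟨RCLike.conj_eq_iff_re.mp (IsSelfAdjoint.of_nonneg (hb_inner v)),
    (RCLike.nonneg_iff.mp (hb_inner v)).1⟩

theorem stmt15_general {e f : H →L[ℂ] H} (hsep : IsSeparatingVector M ξ) (heM : e ∈ M)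
    (he : 0 ≤ e) (hfM : f ∈ M) (hf : IsIdempotentElem f)
    (h : (ξ - e ξ) - f ξ ∈ sharpCone M ξ) : e * f = 0 := by
  have hbM : 1 - e - f ∈ M := sub_mem (sub_mem (one_mem M) heM) hfM
  have hb : 0 ≤ 1 - e - f := nonneg_of_apply_mem_sharpCone hsep.isCyclicVector_commutant_s15 hbM h
  have hf_sa : IsSelfAdjoint f := by
    simpa only [sub_sub_cancel] using
      ((IsSelfAdjoint.one _).sub (.of_nonneg he)).sub (IsSelfAdjoint.of_nonneg hb)
  have hef : e ≤ 1 - f := by rwa [← sub_nonneg, sub_right_comm]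
  have hmul : e * (1 - f) = e :=
    (IsStarProjection.mul_right_and_mul_left_of_nonneg_of_le
      (IsStarProjection.one_sub ⟨hf, hf_sa⟩) he hef).1
  rwa [mul_one_sub, sub_eq_self] at hmul

end

/-- If `e` and `f` are projections in `M` with `(ξ₀ - e ξ₀) - f ξ₀ ∈ P♯`,
then `e f = 0`. -/
theorem stmt15 (M : VonNeumannAlgebra H) (ξ₀ : H)
    (hcyc : IsCyclicVector M ξ₀) (hsep : IsSeparatingVector M ξ₀)
    (e f : H →L[ℂ] H) (heM : e ∈ M) (he_sa : IsSelfAdjoint e) (he_idem : e * e = e)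
    (hfM : f ∈ M) (hf_sa : IsSelfAdjoint f) (hf_idem : f * f = f)
    (h : (ξ₀ - e ξ₀) - f ξ₀ ∈ sharpCone M ξ₀) :
    e * f = 0 := by
  exact stmt15_general hsep heM (IsStarProjection.nonneg ⟨he_idem, he_sa⟩) hfM hf_idem h
end

section
/- Let H be a complex Hilbert space, M a von Neumann algebra acting on H, and ξ₀ a cyclic and separating vector for M. Let e ∈ M be a projection and p an orthogonal projection on H such that p x ξ₀ = x e ξ₀ for every x ∈ M. Then p ξ₀ = e ξ₀, p commutes with every element of M (p belongs to the commutant M′), and ⟨x e ξ₀, ξ₀⟩ = ⟨e x ξ₀, ξ₀⟩ for every x ∈ M. -/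
open scoped InnerProductSpace
open Filter

variable {H : Type*} [NormedAddCommGroup H] [InnerProductSpace ℂ H] [CompleteSpace H]

theorem commute_of_forall_apply_apply_eq {R E A : Type*} [Semiring R] [AddCommMonoid E] [Module R E]
    [TopologicalSpace E] [T2Space E] [SetLike A (E →L[R] E)] [MulMemClass A (E →L[R] E)]
    {S : A} {ξ η : E} {p : E →L[R] E}
    (hcyc : Dense (Submodule.span R ((fun x : E →L[R] E => x ξ) '' (S : Set (E →L[R] E))) : Set E))
    (hp : ∀ x ∈ S, p (x ξ) = x η) {x : E →L[R] E} (hx : x ∈ S) : Commute p x := by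
  refine ContinuousLinearMap.ext_on hcyc ?_
  rintro _ ⟨y, hy, rfl⟩
  calc p (x (y ξ)) = x (y η) := hp (x * y) (mul_mem hx hy)
    _ = x (p (y ξ)) := by rw [hp y hy]

section InnerProduct

variable {𝕜 E : Type*} [RCLike 𝕜] [NormedAddCommGroup E] [InnerProductSpace 𝕜 E]

theorem inner_apply_left_eq_of_isSymmetric {p e : E →ₗ[𝕜] E} (hp : p.IsSymmetric)
    (he : e.IsSymmetric) {ξ : E} (h : p ξ = e ξ) (ζ : E) : ⟪p ζ, ξ⟫_𝕜 = ⟪e ζ, ξ⟫_𝕜 :=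
  calc ⟪p ζ, ξ⟫_𝕜 = ⟪ζ, p ξ⟫_𝕜 := hp ζ ξ
    _ = ⟪ζ, e ξ⟫_𝕜 := by rw [h]
    _ = ⟪e ζ, ξ⟫_𝕜 := (he ζ ξ).symm

theorem stmt19_general {A : Type*} [SetLike A (E →L[𝕜] E)] [SubmonoidClass A (E →L[𝕜] E)]
    (S : A) (ξ : E)
    (hcyc : Dense (Submodule.span 𝕜 ((fun x : E →L[𝕜] E => x ξ) '' (S : Set (E →L[𝕜] E))) : Set E))
    {e : E →ₗ[𝕜] E} (he : e.IsSymmetric) {p : E →L[𝕜] E} (hp : p.IsSymmetric)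
    (hpe : ∀ x ∈ S, p (x ξ) = x (e ξ)) :
    p ξ = e ξ ∧ (∀ x ∈ S, p * x = x * p) ∧ ∀ x ∈ S, ⟪x (e ξ), ξ⟫_𝕜 = ⟪e (x ξ), ξ⟫_𝕜 := by
  have hξ : p ξ = e ξ := hpe 1 (one_mem S)
  refine ⟨hξ, fun x hx => commute_of_forall_apply_apply_eq hcyc hpe hx, fun x hx => ?_⟩
  rw [← hpe x hx]
  exact inner_apply_left_eq_of_isSymmetric hp he hξ (x ξ)

end InnerProduct

/-- If `e ∈ M` is a projection and `p` an orthogonal projection on `H` with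
`p x ξ₀ = x e ξ₀` for all `x ∈ M`, then `p ξ₀ = e ξ₀`, `p ∈ M′`, and
`⟨x e ξ₀, ξ₀⟩ = ⟨e x ξ₀, ξ₀⟩` for all `x ∈ M`. -/
theorem stmt19 (M : VonNeumannAlgebra H) (ξ₀ : H)
    (hcyc : IsCyclicVector M ξ₀) (hsep : IsSeparatingVector M ξ₀)
    (e : H →L[ℂ] H) (heM : e ∈ M) (he_sa : IsSelfAdjoint e) (he_idem : e * e = e)
    (p : H →L[ℂ] H) (hp_sa : IsSelfAdjoint p) (hp_idem : p * p = p)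
    (hpe : ∀ x ∈ M, p (x ξ₀) = x (e ξ₀)) :
    p ξ₀ = e ξ₀ ∧ (∀ x ∈ M, p * x = x * p) ∧
      ∀ x ∈ M, ⟪(x * e) ξ₀, ξ₀⟫_ℂ = ⟪(e * x) ξ₀, ξ₀⟫_ℂ :=
  stmt19_general M ξ₀ hcyc he_sa.isSymmetric hp_sa.isSymmetric hpe
end
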